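/- arXiv:2105.00395 — 2 statements merged into one kernel-verified Lean document; each statement's English description precedes it below -/
import Mathlib

section
/- Let T ∈ ℕ with T ≥ 1, r ∈ (0,1], δ ∈ (0,1), σ_n > 0, Q > 0, and let ε ∈ ℝ satisfy ln(1/δ) < ε ≤ T ln(1 + 4r²) + ln(1/δ). Define β = (σ_n²/2) · ln((exp((ε − ln(1/δ))/T) − (1 − 4r²))/(4r²)) / Q and x = 2βQ/σ_n². Then β ≥ 0, x ≤ ln 2, and T · ln(1 + r² · min{4(exp(x) − 1), 2 exp(x)}) + ln(1/δ) = ε. -/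
/-!
The bound charges every slot the same loss, so after removing `log (1 / δ)` and dividing by `T` it
suffices to invert the loss of one slot. As long as `exp x ≤ 2`, the minimum is `4 * (exp x - 1)`
and the loss is `log (1 + 4 * r ^ 2 * (exp x - 1))`, which has an explicit inverse. The value
`x = log 2` corresponds to the slot budget `log (1 + 4 * r ^ 2)`, whence the upper bound on `ε`.
-/

open Real

/-- The privacy loss charged by the loose bound to a single time slot, at worker-subsampling ratio
`r` and exponent `x = 2βQ / σ_n²`. The total bound is `T` times this plus `log (1 / δ)`. -/
noncomputable def slotPrivacyLoss (r x : ℝ) : ℝ :=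
  log (1 + r ^ 2 * min (4 * (exp x - 1)) (2 * exp x))

/-- The exponent `x` that spends a privacy budget `s` in one slot, obtained by solving
`exp s = 1 + 4 * r ^ 2 * (exp x - 1)`. This uses the first branch of the minimum in
`slotPrivacyLoss`, and is thus the right exponent only for `s ≤ log (1 + 4 * r ^ 2)`. -/
noncomputable def calibratedExponent (r s : ℝ) : ℝ :=
  log ((exp s - (1 - 4 * r ^ 2)) / (4 * r ^ 2))

theorem four_mul_exp_sub_one_le_two_mul_exp_iff {x : ℝ} :
    4 * (exp x - 1) ≤ 2 * exp x ↔ x ≤ log 2 := by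
  rw [le_log_iff_exp_le two_pos]
  constructor <;> intro h <;> linarith

theorem slotPrivacyLoss_of_le_log_two (r : ℝ) {x : ℝ} (hx : x ≤ log 2) :
    slotPrivacyLoss r x = log (1 + r ^ 2 * (4 * (exp x - 1))) := by
  rw [slotPrivacyLoss, min_eq_left (four_mul_exp_sub_one_le_two_mul_exp_iff.mpr hx)]

section Calibration

variable {r s : ℝ}

theorem exp_calibratedExponent (hr : r ≠ 0) (hs : 1 - 4 * r ^ 2 < exp s) :
    exp (calibratedExponent r s) = (exp s - (1 - 4 * r ^ 2)) / (4 * r ^ 2) :=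
  exp_log (div_pos (sub_pos.mpr hs) (by positivity))

theorem calibratedExponent_nonneg (hr : r ≠ 0) (hs : 0 ≤ s) : 0 ≤ calibratedExponent r s := by
  have hr' : 0 < 4 * r ^ 2 := by positivity
  have hexp : 1 ≤ exp s := one_le_exp hs
  apply log_nonneg
  rw [one_le_div hr']
  linarith

theorem calibratedExponent_le_log_two_iff (hr : r ≠ 0) (hs : 1 - 4 * r ^ 2 < exp s) :
    calibratedExponent r s ≤ log 2 ↔ s ≤ log (1 + 4 * r ^ 2) := by
  have hr' : 0 < 4 * r ^ 2 := by positivity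
  rw [le_log_iff_exp_le two_pos, exp_calibratedExponent hr hs, div_le_iff₀ hr',
    le_log_iff_exp_le (by positivity)]
  constructor <;> intro h <;> linarith

theorem slotPrivacyLoss_calibratedExponent (hr : r ≠ 0) (hs : 1 - 4 * r ^ 2 < exp s)
    (hs' : s ≤ log (1 + 4 * r ^ 2)) : slotPrivacyLoss r (calibratedExponent r s) = s := by
  have hinv : 1 + r ^ 2 * (4 * (exp (calibratedExponent r s) - 1)) = exp s := by
    rw [exp_calibratedExponent hr hs]
    field_simp
    ring
  rw [slotPrivacyLoss_of_le_log_two r ((calibratedExponent_le_log_two_iff hr hs).mpr hs'), hinv,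
    log_exp]

end Calibration

theorem stmt9_general {T r σn Q L ε β x : ℝ} (hT : 0 < T) (hr : r ≠ 0) (hσ : σn ≠ 0) (hQ : 0 < Q)
    (hε₁ : L ≤ ε) (hε₂ : ε ≤ T * log (1 + 4 * r ^ 2) + L)
    (hβ : β = (σn ^ 2 / 2) *
      log ((exp ((ε - L) / T) - (1 - 4 * r ^ 2)) / (4 * r ^ 2)) / Q)
    (hx : x = 2 * β * Q / σn ^ 2) :
    0 ≤ β ∧ x ≤ log 2 ∧
      T * log (1 + r ^ 2 * min (4 * (exp x - 1)) (2 * exp x)) + L = ε := by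
  set s := (ε - L) / T with hs
  have hs_nonneg : 0 ≤ s := div_nonneg (sub_nonneg.mpr hε₁) hT.le
  have hs_le : s ≤ log (1 + 4 * r ^ 2) := by
    rw [hs, div_le_iff₀' hT]
    linarith
  have hs_dom : 1 - 4 * r ^ 2 < exp s :=
    (sub_lt_self 1 (by positivity)).trans_le (one_le_exp hs_nonneg)
  change β = σn ^ 2 / 2 * calibratedExponent r s / Q at hβ
  have hx' : x = calibratedExponent r s := by
    rw [hx, hβ]
    field_simp
  have hx_nonneg : 0 ≤ calibratedExponent r s := calibratedExponent_nonneg hr hs_nonneg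
  change 0 ≤ β ∧ x ≤ log 2 ∧ T * slotPrivacyLoss r x + L = ε
  refine ⟨by rw [hβ]; positivity, ?_, ?_⟩
  · rw [hx']
    exact (calibratedExponent_le_log_two_iff hr hs_dom).mpr hs_le
  · rw [hx', slotPrivacyLoss_calibratedExponent hr hs_dom hs_le, hs, mul_div_cancel₀ _ hT.ne',
      sub_add_cancel]

theorem stmt9 (T : ℕ) (hT : 1 ≤ T) (r δ σn Q : ℝ)
    (hr : r ∈ Set.Ioc (0 : ℝ) 1) (hδ : δ ∈ Set.Ioo (0 : ℝ) 1)
    (hσ : 0 < σn) (hQ : 0 < Q) (ε : ℝ)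
    (hε₁ : Real.log (1 / δ) < ε)
    (hε₂ : ε ≤ T * Real.log (1 + 4 * r ^ 2) + Real.log (1 / δ))
    (β x : ℝ)
    (hβ : β = (σn ^ 2 / 2) *
      Real.log ((Real.exp ((ε - Real.log (1 / δ)) / T) - (1 - 4 * r ^ 2)) / (4 * r ^ 2)) / Q)
    (hx : x = 2 * β * Q / σn ^ 2) :
    0 ≤ β ∧ x ≤ Real.log 2 ∧
      T * Real.log (1 + r ^ 2 * min (4 * (Real.exp x - 1)) (2 * Real.exp x)) +
        Real.log (1 / δ) = ε := by
  exact stmt9_general (Nat.cast_pos.mpr hT) hr.1.ne' hσ.ne' hQ hε₁.le hε₂ hβ hx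
end

section
/- Let T ∈ ℕ with T ≥ 1, r ∈ (0,1], σ_n > 0, Q > 0, ε ∈ ℝ, and define the piecewise power scaling factor β(δ) = (σ_n²/2)·ln((exp((ε − ln(1/δ))/T) − 1)/(2r²))/Q if ε ≥ T ln(1+4r²) + ln(1/δ), and β(δ) = (σ_n²/2)·ln((exp((ε − ln(1/δ))/T) − (1 − 4r²))/(4r²))/Q otherwise. Then for all δ₁, δ₂ with 0 < δ₁ ≤ δ₂ < 1 and ε > ln(1/δ₁), one has β(δ₁) ≤ β(δ₂). -/
/-!
Up to the positive factor `σn² / (2 Q)`, the two branches of `β` are the logarithms of `x` and of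
`1 + x / 2`, where `x = (exp b - 1) / (2 r²)` and `b = (ε - log (1 / δ)) / T`. The threshold on `ε`
selects the first branch exactly when `2 ≤ x`, that is, when `1 + x / 2 ≤ x`: the piecewise formula
is a maximum of two increasing functions in disguise, and no crossing of branches has to be studied.
-/

open Real Set

/-- The privacy budget left to each of the `T` time slots once the failure probability `δ` has been
traded for `log (1 / δ)` units of the total budget `ε`. The number of slots is taken real. -/
noncomputable def perSlotBudget (T ε δ : ℝ) : ℝ :=
  (ε - log (1 / δ)) / T

theorem strictMonoOn_perSlotBudget {T : ℝ} (hT : 0 < T) (ε : ℝ) :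
    StrictMonoOn (perSlotBudget T ε) (Ioi 0) := by
  intro δ₁ (h₁ : 0 < δ₁) δ₂ (h₂ : 0 < δ₂) h
  have hlog : log (1 / δ₂) < log (1 / δ₁) :=
    log_lt_log (one_div_pos.2 h₂) (one_div_lt_one_div_of_lt h₁ h)
  exact div_lt_div_of_pos_right (sub_lt_sub_left hlog ε) hT

theorem log_one_div_lt_iff_exp_neg_lt {ε δ : ℝ} (hδ : 0 < δ) :
    log (1 / δ) < ε ↔ exp (-ε) < δ := by
  rw [one_div, log_inv, neg_lt, lt_log_iff_exp_lt hδ]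

theorem perSlotBudget_pos {T ε δ : ℝ} (hT : 0 < T) (hδ : exp (-ε) < δ) :
    0 < perSlotBudget T ε δ := by
  have hlog : log (1 / δ) < ε := (log_one_div_lt_iff_exp_neg_lt ((exp_pos _).trans hδ)).2 hδ
  exact div_pos (sub_pos.2 hlog) hT

theorem mul_log_add_log_one_div_le_iff {T s : ℝ} (hT : 0 < T) (hs : 0 < s) (ε δ : ℝ) :
    T * log s + log (1 / δ) ≤ ε ↔ s ≤ exp (perSlotBudget T ε δ) := by
  rw [← log_le_iff_le_exp hs, perSlotBudget, le_div_iff₀' hT, le_sub_iff_add_le]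

/-- The value of `exp (2 Q β / σn²)` permitted by a per-slot budget `b` at subsampling ratio `r`;
the two entries of the maximum are the arguments of the logarithms in the two branches of `β`. -/
noncomputable def scalingArg (r b : ℝ) : ℝ :=
  max ((exp b - 1) / (2 * r ^ 2)) ((exp b - (1 - 4 * r ^ 2)) / (4 * r ^ 2))

theorem strictMono_scalingArg {r : ℝ} (hr : r ≠ 0) : StrictMono (scalingArg r) := by
  intro b₁ b₂ h
  apply max_lt_max <;> gcongr

theorem scalingArg_pos {r b : ℝ} (hr : r ≠ 0) (hb : 0 < b) : 0 < scalingArg r b := by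
  have hexp : 0 < exp b - 1 := sub_pos.2 (one_lt_exp_iff.2 hb)
  exact lt_max_of_lt_left (by positivity)

theorem scalingArg_eq_ite {r : ℝ} (hr : r ≠ 0) (b : ℝ) :
    scalingArg r b =
      if 1 + 4 * r ^ 2 ≤ exp b then (exp b - 1) / (2 * r ^ 2)
      else (exp b - (1 - 4 * r ^ 2)) / (4 * r ^ 2) := by
  have hbranch : (exp b - (1 - 4 * r ^ 2)) / (4 * r ^ 2) ≤ (exp b - 1) / (2 * r ^ 2) ↔
      1 + 4 * r ^ 2 ≤ exp b := by
    have hdenom : (exp b - 1) / (2 * r ^ 2) = 2 * (exp b - 1) / (4 * r ^ 2) := by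
      field_simp
      norm_num
    rw [hdenom, div_le_div_iff_of_pos_right (by positivity)]
    constructor <;> intro h <;> linarith
  rw [scalingArg, max_def']
  simp only [hbranch]

theorem strictMonoOn_log_scalingArg_perSlotBudget {T r : ℝ} (hT : 0 < T) (hr : r ≠ 0) (ε : ℝ) :
    StrictMonoOn (fun δ ↦ log (scalingArg r (perSlotBudget T ε δ))) (Ioi (exp (-ε))) := by
  have hbudget : StrictMonoOn (perSlotBudget T ε) (Ioi (exp (-ε))) :=
    (strictMonoOn_perSlotBudget hT ε).mono (Ioi_subset_Ioi (exp_pos _).le)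
  exact strictMonoOn_log.comp ((strictMono_scalingArg hr).comp_strictMonoOn hbudget)
    fun _ hδ ↦ scalingArg_pos hr (perSlotBudget_pos hT hδ)

theorem stmt13_general {T r σn Q ε : ℝ} (hT : 0 < T) (hr : r ≠ 0) (hσ : σn ≠ 0) (hQ : 0 < Q)
    {β : ℝ → ℝ}
    (hβ : ∀ δ : ℝ, β δ =
      if T * log (1 + 4 * r ^ 2) + log (1 / δ) ≤ ε then
        (σn ^ 2 / 2) * log ((exp ((ε - log (1 / δ)) / T) - 1) / (2 * r ^ 2)) / Q
      else
        (σn ^ 2 / 2) *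
          log ((exp ((ε - log (1 / δ)) / T) - (1 - 4 * r ^ 2)) / (4 * r ^ 2)) / Q) :
    StrictMonoOn β (Ioi (exp (-ε))) := by
  have hβ_eq (δ : ℝ) : β δ = σn ^ 2 / 2 * log (scalingArg r (perSlotBudget T ε δ)) / Q := by
    simp only [hβ, mul_log_add_log_one_div_le_iff hT (by positivity : 0 < 1 + 4 * r ^ 2),
      scalingArg_eq_ite hr]
    split_ifs <;> rfl
  intro δ₁ h₁ δ₂ h₂ h
  have hlog := strictMonoOn_log_scalingArg_perSlotBudget hT hr ε h₁ h₂ h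
  rw [hβ_eq, hβ_eq]
  gcongr

theorem stmt13 (T : ℕ) (hT : 1 ≤ T) (r σn Q ε : ℝ)
    (hr : r ∈ Set.Ioc (0 : ℝ) 1) (hσ : 0 < σn) (hQ : 0 < Q)
    (β : ℝ → ℝ)
    (hβ : ∀ δ : ℝ, β δ =
      if T * Real.log (1 + 4 * r ^ 2) + Real.log (1 / δ) ≤ ε then
        (σn ^ 2 / 2) *
          Real.log ((Real.exp ((ε - Real.log (1 / δ)) / T) - 1) / (2 * r ^ 2)) / Q
      else
        (σn ^ 2 / 2) *
          Real.log ((Real.exp ((ε - Real.log (1 / δ)) / T) - (1 - 4 * r ^ 2)) / (4 * r ^ 2)) / Q) :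
    ∀ δ₁ δ₂ : ℝ, 0 < δ₁ → δ₁ ≤ δ₂ → δ₂ < 1 → Real.log (1 / δ₁) < ε → β δ₁ ≤ β δ₂ := by
  intro δ₁ δ₂ h₁ h _ hε
  have hδ₁ : exp (-ε) < δ₁ := (log_one_div_lt_iff_exp_neg_lt h₁).1 hε
  exact (stmt13_general (Nat.cast_pos.2 hT) hr.1.ne' hσ.ne' hQ hβ).monotoneOn
    hδ₁ (hδ₁.trans_le h) h
end
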